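/- For every λ, b ∈ ℂ, the operators L^{λ,b}_n := L¹_n + ((λ − 1/2)(n + 1/2) − b) · h_n + M(λ,b) · δ_{n,0} · id_F, where M(λ,b) = (16b² + 8b(1−2λ) − 3(1−2λ)²)/32, satisfy the Virasoro relations with central charge −12λ² + 12λ − 2. In particular, for λ = 1/2 and b = 0 one recovers L^{1/2,0}_n = L¹_n with central charge 1. (These are the modes of the two-parameter family of 2-point-local Virasoro fields L^{λ,b}(z²) = L¹(z²) + (1/2 − λ)(1/(2z²))∂_z h^D(z) − (b/z³)h^D(z) + M(λ,b)/z⁴ on F^{⊗1/2}.) -/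

import Mathlib

noncomputable section

/-- The neutral fermion Fock space `F = F^{⊗1/2}`: the complex vector space with
basis `{e_S : S a finite subset of ℕ}`. -/
abbrev FockD : Type := Finset ℕ →₀ ℂ

/-- Basis vector `e_S`. -/
def eD (S : Finset ℕ) : FockD := Finsupp.single S 1

/-- Action of the fermion mode `a_m` on the basis vector `e_S`. -/
def aVec (m : ℤ) (S : Finset ℕ) : FockD :=
  if 0 ≤ m then
    if m.toNat ∈ S then 0
    else ((-1 : ℂ) ^ (S.filter (fun s => m.toNat < s)).card) • eD (insert m.toNat S)
  else
    if (-m - 1).toNat ∈ S then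
      ((-1 : ℂ) ^ (S.filter (fun s => (-m - 1).toNat < s)).card) • eD (S.erase ((-m - 1).toNat))
    else 0

/-- The fermion mode `a_m` as a linear operator on `F`. -/
def aOp (m : ℤ) : FockD →ₗ[ℂ] FockD :=
  Finsupp.lsum ℂ fun S => LinearMap.toSpanSingleton ℂ FockD (aVec m S)

/-- Fermionic normal ordered product `:a_i a_j:`. -/
def NO (i j : ℤ) : FockD →ₗ[ℂ] FockD :=
  if 0 ≤ i then (aOp i).comp (aOp j) else -((aOp j).comp (aOp i))

/-- Heisenberg operator `h_n = (1/2) ∑_{i∈ℤ} (−1)^{i+1} :a_i a_{−2n−1−i}:`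
(on each vector only finitely many summands are nonzero). -/
def hD (n : ℤ) (x : FockD) : FockD :=
  (1 / 2 : ℂ) • ∑ᶠ i : ℤ, ((-1 : ℂ) ^ (i + 1)) • NO i (-2 * n - 1 - i) x

/-- Virasoro operator `L^{1/2}_m = (1/2) ∑_{i∈ℤ} i · :a_i a_{−m−i−1}:`. -/
def LhalfD (m : ℤ) (x : FockD) : FockD :=
  (1 / 2 : ℂ) • ∑ᶠ i : ℤ, (i : ℂ) • NO i (-m - i - 1) x

/-- 2-point Virasoro operator `L¹_n = (1/2) ∑_{j∈ℤ} :h_j h_{n−j}:`, where the bosonic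
normal ordered product is `:h_j h_k: = h_j h_k` if `j ≤ k` and `h_k h_j` otherwise. -/
def L1D (n : ℤ) (x : FockD) : FockD :=
  (1 / 2 : ℂ) • ∑ᶠ j : ℤ, if j ≤ n - j then hD j (hD (n - j) x) else hD (n - j) (hD j x)

/-- Charge `c(S) = #{s ∈ S : s odd} − #{s ∈ S : s even}`. -/
def chg (S : Finset ℕ) : ℤ :=
  ((S.filter fun s => Odd s).card : ℤ) - ((S.filter fun s => Even s).card : ℤ)

/-- Charge-`n` component `F_{(n)}`: the span of the `e_S` with `c(S) = n`. -/
def FockComp (n : ℤ) : Submodule ℂ FockD :=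
  Submodule.span ℂ {x : FockD | ∃ S : Finset ℕ, chg S = n ∧ x = eD S}

/-- Index set of the vacuum-like vector `v_n`. -/
def vSet (n : ℤ) : Finset ℕ :=
  if 0 ≤ n then (Finset.range n.toNat).image fun i => 2 * i + 1
  else (Finset.range (-n).toNat).image fun i => 2 * i

/-- Vacuum-like vector `v_n` (`v_0 = e_∅`, `v_n = e_{{1,3,…,2n−1}}`,
`v_{−n} = e_{{0,2,…,2n−2}}` for `n > 0`). -/
def vD (n : ℤ) : FockD := eD (vSet n)

/-- The constant `M(λ,b) = (16b² + 8b(1−2λ) − 3(1−2λ)²)/32`. -/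
def Mconst (lam b : ℂ) : ℂ :=
  (16 * b ^ 2 + 8 * b * (1 - 2 * lam) - 3 * (1 - 2 * lam) ^ 2) / 32

/-- The two-parameter family of 2-point Virasoro operators
`L^{λ,b}_n = L¹_n + ((λ − 1/2)(n + 1/2) − b) h_n + M(λ,b) δ_{n,0} id`. -/
def Llb (lam b : ℂ) (n : ℤ) (x : FockD) : FockD :=
  L1D n x + ((lam - 1 / 2) * ((n : ℂ) + 1 / 2) - b) • hD n x
    + (if n = 0 then Mconst lam b else 0) • x

/-!
Sums of modes converge pointwise, so brackets may be computed termwise. Replacing every normal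
ordered product by the plain product minus its contraction, the bracket of a mode with a normal
ordered series becomes the expected series, plus the difference of a series and its shift, which
cancels, plus a finite telescoping sum of contractions, which is the central term. This is used
twice: the bilinears in the neutral fermion form a Heisenberg field, and the bilinears in a
Heisenberg field satisfy the Virasoro relations with `c = 1`. Adding `(α n + β) h_n` to `L_n` and
the constant `(β² - α²)/2` to `L_0` keeps the Virasoro relations and lowers the central charge by
`12 α²`; the theorem is the case `α = λ - 1/2`, `β = α/2 - b`.
-/

open Filter Function
open scoped symmDiff

attribute [local instance] LieRing.ofAssociativeRing

section PointwiseSums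

variable {R V W X ι κ : Type*} [CommRing R] [AddCommGroup V] [Module R V]
  [AddCommGroup W] [Module R W] [AddCommGroup X] [Module R X]

/-- `f` has pointwise sum `T`: on each vector only finitely many `f i` are nonzero, and their values
add up to that of `T`. This is the sense in which the formal series of modes converge. -/
def HasPointwiseSum (f : ι → V →ₗ[R] W) (T : V →ₗ[R] W) : Prop :=
  ∀ x, HasFiniteSupport (fun i => f i x) ∧ ∑ᶠ i, f i x = T x

/-- The sum of a family of linear maps, only finitely many of which are nonzero on each vector. -/
def pointwiseSum (f : ι → V →ₗ[R] W) (hf : ∀ x, HasFiniteSupport fun i => f i x) : V →ₗ[R] W where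
  toFun x := ∑ᶠ i, f i x
  map_add' x y := by simp only [map_add, finsum_add_distrib (hf x) (hf y)]
  map_smul' c x := by simp only [map_smul, RingHom.id_apply, smul_finsum' c (hf x)]

lemma hasPointwiseSum_pointwiseSum (f : ι → V →ₗ[R] W) (hf : ∀ x, HasFiniteSupport fun i => f i x) :
    HasPointwiseSum f (pointwiseSum f hf) :=
  fun x => ⟨hf x, rfl⟩

lemma hasPointwiseSum_single [DecidableEq ι] (i : ι) (T : V →ₗ[R] W) :
    HasPointwiseSum (Pi.single i T) T := by
  have eq_zero (x : V) : ∀ j, j ≠ i → Pi.single (M := fun _ => V →ₗ[R] W) i T j x = 0 :=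
    fun j hj => by rw [Pi.single_eq_of_ne hj, LinearMap.zero_apply]
  refine fun x => ⟨(Set.finite_singleton i).subset fun j hj => ?_, ?_⟩
  · exact by_contra fun hji => hj (eq_zero x j hji)
  · rw [finsum_eq_single _ i (eq_zero x), Pi.single_eq_same]

namespace HasPointwiseSum

variable {f g : ι → V →ₗ[R] W} {S T : V →ₗ[R] W}

lemma unique (hS : HasPointwiseSum f S) (hT : HasPointwiseSum f T) : S = T :=
  LinearMap.ext fun x => (hS x).2.symm.trans (hT x).2

lemma add (hf : HasPointwiseSum f S) (hg : HasPointwiseSum g T) :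
    HasPointwiseSum (fun i => f i + g i) (S + T) := fun x =>
  ⟨(hf x).1.add (hg x).1, by
    simp only [LinearMap.add_apply, finsum_add_distrib (hf x).1 (hg x).1, (hf x).2, (hg x).2]⟩

lemma sub (hf : HasPointwiseSum f S) (hg : HasPointwiseSum g T) :
    HasPointwiseSum (fun i => f i - g i) (S - T) := fun x =>
  ⟨(hf x).1.sub (hg x).1, by
    simp only [LinearMap.sub_apply, finsum_sub_distrib (hf x).1 (hg x).1, (hf x).2, (hg x).2]⟩

lemma comp_left (A : W →ₗ[R] X) (hf : HasPointwiseSum f S) :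
    HasPointwiseSum (fun i => A ∘ₗ f i) (A ∘ₗ S) := fun x =>
  ⟨(hf x).1.fun_comp (map_zero A), by
    simp only [LinearMap.comp_apply, ← map_finsum A (hf x).1, (hf x).2]⟩

lemma comp_right (hf : HasPointwiseSum f S) (A : X →ₗ[R] V) :
    HasPointwiseSum (fun i => f i ∘ₗ A) (S ∘ₗ A) :=
  fun x => hf (A x)

lemma const_smul (c : R) (hf : HasPointwiseSum f S) :
    HasPointwiseSum (fun i => c • f i) (c • S) :=
  hf.comp_left (c • LinearMap.id)

lemma comp_equiv (hf : HasPointwiseSum f S) (e : κ ≃ ι) : HasPointwiseSum (fun k => f (e k)) S :=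
  fun x => ⟨(hf x).1.fun_comp_of_injective e.injective, (finsum_comp_equiv e).trans (hf x).2⟩

lemma exists_smul (c : ι → R) (hf : HasPointwiseSum f S) :
    ∃ T, HasPointwiseSum (fun i => c i • f i) T :=
  ⟨_, hasPointwiseSum_pointwiseSum _ fun x => .smul_right c (hf x).1⟩

variable {f : ι → Module.End R V} {T : Module.End R V}

lemma lie_left (hf : HasPointwiseSum f T) (A : Module.End R V) :
    HasPointwiseSum (fun i => ⁅f i, A⁆) ⁅T, A⁆ :=
  (hf.comp_right A).sub (hf.comp_left A)

lemma lie_right (A : Module.End R V) (hf : HasPointwiseSum f T) :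
    HasPointwiseSum (fun i => ⁅A, f i⁆) ⁅A, T⁆ :=
  (hf.comp_left A).sub (hf.comp_right A)

end HasPointwiseSum

variable (R) in
/-- The indicator function of the nonnegative integers. -/
def unitStep (j : ℤ) : R := if 0 ≤ j then 1 else 0

lemma unitStep_add_one (j : ℤ) :
    unitStep R (j + 1) = unitStep R j + (Pi.single (-1) 1 : ℤ → R) j := by
  rcases lt_trichotomy j (-1) with h | rfl | h
  · simp [unitStep, show ¬ 0 ≤ j + 1 by omega, show ¬ 0 ≤ j by omega, h.ne]
  · simp [unitStep]
  · simp [unitStep, show 0 ≤ j + 1 by omega, show 0 ≤ j by omega, h.ne']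

/-- Telescoping: the differences `unitStep j - unitStep (j + s)` are nonzero only between `-s` and
`0`, so summing `f` against them amounts to evaluating a discrete antiderivative `F` of `f`. -/
lemma hasPointwiseSum_mul_unitStep_sub {f F : ℤ → R} (hF : ∀ j, F (j + 1) - F j = f j) (s : ℤ)
    (T : V →ₗ[R] W) :
    HasPointwiseSum (fun j => (f j * (unitStep R j - unitStep R (j + s))) • T)
      ((F (-s) - F 0) • T) := by
  have shift (s : ℤ) : HasPointwiseSum
      (fun j => (f j * (unitStep R (j + s + 1) - unitStep R (j + s))) • T) (f (-s - 1) • T) := by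
    convert hasPointwiseSum_single (-s - 1) (f (-s - 1) • T) using 2 with j
    rw [unitStep_add_one, add_sub_cancel_left]
    rcases eq_or_ne j (-s - 1) with rfl | h
    · simp [show -s - 1 + s = -1 by ring]
    · simp [h, show j + s ≠ -1 by omega]
  induction s with
  | zero => simp [HasPointwiseSum, HasFiniteSupport]
  | succ s ih =>
    convert ih.sub (shift s) using 2
    · rw [← add_assoc]; module
    · rw [← hF, show -(s : ℤ) - 1 + 1 = -s by ring, neg_add']; module
  | pred s ih =>
    convert ih.add (shift (-s - 1)) using 2
    · rw [show ∀ j : ℤ, j + (-s - 1) + 1 = j + -s by intro j; ring]; module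
    · rw [← hF, show -(-(s : ℤ) - 1) - 1 + 1 = - (-s - 1) by ring,
        show -(-(s : ℤ) - 1) - 1 = - -s by ring]; module

end PointwiseSums

section Heisenberg

variable {R V : Type*} [CommRing R] [AddCommGroup V] [Module R V]

/-- The modes of a neutral fermion field acting on a space where every vector is annihilated by all
but finitely many annihilation operators. -/
structure IsNeutralFermion (a : ℤ → Module.End R V) : Prop where
  anticomm : ∀ m n, a m * a n + a n * a m = if m + n = -1 then 1 else 0
  eventually_eq_zero : ∀ x, ∀ᶠ m in atBot, a m x = 0

/-- The modes of a Heisenberg field of level one acting on a space where every vector is annihilated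
by all modes of large degree. -/
structure IsHeisenberg (h : ℤ → Module.End R V) : Prop where
  lie_eq : ∀ m n, ⁅h m, h n⁆ = if m + n = 0 then (m : R) • (1 : Module.End R V) else 0
  eventually_eq_zero : ∀ x, ∀ᶠ n in atTop, h n x = 0

lemma hasFiniteSupport_int_iff {M : Type*} [Zero M] {f : ℤ → M} :
    HasFiniteSupport f ↔ (∀ᶠ i in atBot, f i = 0) ∧ ∀ᶠ i in atTop, f i = 0 := by
  rw [← eventually_sup, ← Int.cofinite_eq, eventually_cofinite]
  rfl

section Algebra

variable {A : Type*} [Ring A] [Algebra R A]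

lemma lie_smul_one (x : A) (c : R) : ⁅x, c • (1 : A)⁆ = 0 :=
  ((Commute.one_right x).smul_right c).lie_eq

lemma lie_mul_of_lie_eq_smul {x y y' z z' : A} {c d : R} (hy : ⁅x, y⁆ = c • y')
    (hz : ⁅x, z⁆ = d • z') : ⁅x, y * z⁆ = c • (y' * z) + d • (y * z') := by
  rw [← smul_mul_assoc, ← mul_smul_comm, ← hy, ← hz]
  simp only [Ring.lie_def]
  noncomm_ring

end Algebra

/-- The fermionic normal ordered product `:a_i a_j:`. -/
def fermionNormalOrder (a : ℤ → Module.End R V) (i j : ℤ) : Module.End R V :=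
  if 0 ≤ i then a i * a j else -(a j * a i)

namespace IsNeutralFermion

variable {a : ℤ → Module.End R V} (ha : IsNeutralFermion a)
include ha

/-- The scalar is the contraction of `a_i` and `a_j`, that is, their vacuum expectation value. -/
lemma normalOrder_eq (i j : ℤ) : fermionNormalOrder a i j =
    a i * a j - (if i + j = -1 then 1 - unitStep R i else 0) • (1 : Module.End R V) := by
  rw [fermionNormalOrder, unitStep]
  split_ifs with hi hij hij
  · simp
  · simp
  · rw [eq_sub_of_add_eq ((ha.anticomm i j).trans (if_pos hij))]; simp
  · rw [eq_neg_of_add_eq_zero_left ((ha.anticomm i j).trans (if_neg hij))]; simp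

lemma lie_normalOrder_mode (i j k : ℤ) : ⁅fermionNormalOrder a i j, a k⁆ =
    (if j + k = -1 then a i else 0) - (if i + k = -1 then a j else 0) := by
  have swap : ⁅a i * a j, a k⁆ = a i * (a j * a k + a k * a j) - (a i * a k + a k * a i) * a j := by
    rw [Ring.lie_def]
    noncomm_ring
  rw [ha.normalOrder_eq, sub_lie, ← lie_skew (_ • _), lie_smul_one, neg_zero, sub_zero, swap,
    ha.anticomm, ha.anticomm, mul_ite, ite_mul, mul_one, mul_zero, one_mul, zero_mul]

lemma hasFiniteSupport_normalOrder (s : ℤ) (x : V) :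
    HasFiniteSupport fun i => fermionNormalOrder a i (s - i) x := by
  have hx := ha.eventually_eq_zero x
  refine hasFiniteSupport_int_iff.2 ⟨?_, ?_⟩
  · filter_upwards [hx, eventually_lt_atBot 0] with i hi hneg
    simp [fermionNormalOrder, hneg.not_ge, hi]
  · have htail : Tendsto (fun i : ℤ => s - i) atTop atBot :=
      tendsto_atBot_add_const_left _ s tendsto_neg_atTop_atBot
    filter_upwards [htail.eventually hx, eventually_ge_atTop 0] with i hi hpos
    simp [fermionNormalOrder, hpos, hi]

lemma normalOrder_apply_eq_zero {i j : ℤ} (hij : i + j ≠ -1) {x : V} (hx : a i x = 0 ∨ a j x = 0) :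
    fermionNormalOrder a i j x = 0 := by
  have swap : a i (a j x) = -a j (a i x) :=
    eq_neg_of_add_eq_zero_left <| by
      simpa [hij] using congrArg (fun T : Module.End R V => T x) (ha.anticomm i j)
  rw [ha.normalOrder_eq, if_neg hij, zero_smul, sub_zero, Module.End.mul_apply]
  rcases hx with hx | hx
  · rw [swap, hx, map_zero, neg_zero]
  · rw [hx, map_zero]

end IsNeutralFermion

variable {K : Type*} [Field K] [Module K V] {a : ℤ → Module.End K V}

lemma neg_one_zpow_sub_two_mul (k m : ℤ) : (-1 : K) ^ (k - 2 * m) = (-1) ^ k := by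
  rw [zpow_sub₀ (by simp), (even_two_mul m).neg_one_zpow, div_one]

/-- The modes `h_n = (1/2) ∑_{i ∈ ℤ} (-1)^(i+1) :a_i a_{-2n-1-i}:` of the Heisenberg field built
from a neutral fermion. -/
def heisenbergMode (ha : IsNeutralFermion a) (n : ℤ) : Module.End K V :=
  (1 / 2 : K) • pointwiseSum (fun i => (-1 : K) ^ (i + 1) • fermionNormalOrder a i (-2 * n - 1 - i))
    fun x => .smul_right _ (ha.hasFiniteSupport_normalOrder (-2 * n - 1) x)

namespace IsNeutralFermion

lemma hasPointwiseSum_heisenbergMode (ha : IsNeutralFermion a) (n : ℤ) :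
    HasPointwiseSum
      (fun i => (1 / 2 : K) • (-1 : K) ^ (i + 1) • fermionNormalOrder a i (-2 * n - 1 - i))
      (heisenbergMode ha n) :=
  (hasPointwiseSum_pointwiseSum _ _).const_smul _

lemma eventually_heisenbergMode_eq_zero (ha : IsNeutralFermion a) (x : V) :
    ∀ᶠ n in atTop, heisenbergMode ha n x = 0 := by
  obtain ⟨N, hN⟩ := eventually_atBot.1 (ha.eventually_eq_zero x)
  filter_upwards [eventually_gt_atTop 0, eventually_ge_atTop (-N)] with n hn hnN
  rw [← (ha.hasPointwiseSum_heisenbergMode n x).2]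
  refine finsum_eq_zero_of_forall_eq_zero fun i => ?_
  have annihilates : a i x = 0 ∨ a (-2 * n - 1 - i) x = 0 :=
    (le_or_gt i N).imp (hN i) fun hi => hN _ (by omega)
  rw [LinearMap.smul_apply, LinearMap.smul_apply,
    ha.normalOrder_apply_eq_zero (by omega) annihilates, smul_zero, smul_zero]

lemma lie_heisenbergMode_mode [NeZero (2 : K)] (ha : IsNeutralFermion a) (m k : ℤ) :
    ⁅heisenbergMode ha m, a k⁆ = (-1 : K) ^ (k + 1) • a (k - 2 * m) := by
  let half := (1 / 2 : K) • (-1 : K) ^ (k + 1) • a (k - 2 * m)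
  have sign₁ : (-1 : K) ^ (k - 2 * m + 1) = (-1) ^ (k + 1) := by
    rw [sub_add_eq_add_sub, neg_one_zpow_sub_two_mul]
  have sign₂ : (-1 : K) ^ (-1 - k + 1) = -(-1) ^ (k + 1) := by
    rw [show -1 - k + 1 = k - 2 * k by ring, neg_one_zpow_sub_two_mul, zpow_add_one₀ (by simp)]
    ring
  have halves : HasPointwiseSum
      (fun i => (Pi.single (k - 2 * m) half : ℤ → Module.End K V) i
        + (Pi.single (-1 - k) half : ℤ → Module.End K V) i)
      ((-1 : K) ^ (k + 1) • a (k - 2 * m)) := by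
    convert (hasPointwiseSum_single (k - 2 * m) half).add (hasPointwiseSum_single (-1 - k) half)
    rw [← add_smul, add_halves, one_smul]
  refine ((ha.hasPointwiseSum_heisenbergMode m).lie_left (a k)).unique ?_
  convert halves using 2 with i
  rw [smul_lie, smul_lie, ha.lie_normalOrder_mode, smul_sub, smul_sub, sub_eq_add_neg]
  congr 1
  · rcases eq_or_ne i (k - 2 * m) with rfl | hi
    · rw [if_pos (by ring), Pi.single_eq_same, sign₁]
    · rw [if_neg (by omega), Pi.single_eq_of_ne hi, smul_zero, smul_zero]
  · rcases eq_or_ne i (-1 - k) with rfl | hi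
    · rw [if_pos (by ring), Pi.single_eq_same, sign₂,
        show -2 * m - 1 - (-1 - k) = k - 2 * m by ring]
      module
    · rw [if_neg (by omega), Pi.single_eq_of_ne hi, smul_zero, smul_zero, neg_zero]

lemma lie_heisenbergMode_normalOrder [NeZero (2 : K)] (ha : IsNeutralFermion a) (m i j : ℤ) :
    ⁅heisenbergMode ha m, fermionNormalOrder a i j⁆ =
      (-1 : K) ^ (i + 1) • (a (i - 2 * m) * a j) + (-1 : K) ^ (j + 1) • (a i * a (j - 2 * m)) := by
  rw [ha.normalOrder_eq, lie_sub, lie_smul_one, sub_zero]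
  exact lie_mul_of_lie_eq_smul (ha.lie_heisenbergMode_mode m i) (ha.lie_heisenbergMode_mode m j)

/-- The two terms come from shifting either fermion by `2m`; they differ by a shift of `i`, up to
the difference of the contractions. -/
lemma lie_heisenbergMode_summand [NeZero (2 : K)] (ha : IsNeutralFermion a) (m n i : ℤ) :
    ⁅heisenbergMode ha m, (-1 : K) ^ (i + 1) • fermionNormalOrder a i (-2 * n - 1 - i)⁆ =
      fermionNormalOrder a (i - 2 * m) (-2 * (m + n) - 1 - (i - 2 * m))
        - fermionNormalOrder a i (-2 * (m + n) - 1 - i)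
        + (if m + n = 0 then 1 else 0 : K) •
          (1 * (unitStep K i - unitStep K (i + -(2 * m)))) • (1 : Module.End K V) := by
  have sign_sq : (-1 : K) ^ (i + 1) * (-1) ^ (i + 1) = 1 := by
    rw [← mul_zpow, neg_one_mul, neg_neg, one_zpow]
  have sign_mul : (-1 : K) ^ (i + 1) * (-1) ^ (-2 * n - 1 - i + 1) = -1 := by
    rw [← zpow_add₀ (by simp), show i + 1 + (-2 * n - 1 - i + 1) = 1 - 2 * n by ring,
      neg_one_zpow_sub_two_mul, zpow_one]
  rw [lie_smul, ha.lie_heisenbergMode_normalOrder, smul_add, smul_smul, smul_smul, sign_sq,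
    sign_mul, ha.normalOrder_eq, ha.normalOrder_eq,
    show -2 * (m + n) - 1 - (i - 2 * m) = -2 * n - 1 - i by ring,
    show -2 * (m + n) - 1 - i = -2 * n - 1 - i - 2 * m by ring, ← sub_eq_add_neg i]
  by_cases hmn : m + n = 0
  · rw [if_pos hmn, if_pos (by omega), if_pos (by omega)]
    module
  · rw [if_neg hmn, if_neg (by omega), if_neg (by omega)]
    module

theorem isHeisenberg_heisenbergMode [NeZero (2 : K)] (ha : IsNeutralFermion a) :
    IsHeisenberg (heisenbergMode ha) where
  eventually_eq_zero := ha.eventually_heisenbergMode_eq_zero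
  lie_eq m n := by
    have normalOrder_sum := hasPointwiseSum_pointwiseSum _
      (ha.hasFiniteSupport_normalOrder (-2 * (m + n) - 1))
    have contraction_sum := hasPointwiseSum_mul_unitStep_sub (f := fun _ => 1)
      (F := fun j => (j : K)) (by simp) (-(2 * m)) (1 : Module.End K V)
    have total := (((normalOrder_sum.comp_equiv (Equiv.subRight (2 * m))).sub normalOrder_sum).add
      (contraction_sum.const_smul (if m + n = 0 then 1 else 0))).const_smul (1 / 2 : K)
    refine ((ha.hasPointwiseSum_heisenbergMode n).lie_right (heisenbergMode ha m)).unique ?_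
    convert total using 2 with i
    · rw [lie_smul, ha.lie_heisenbergMode_summand, Equiv.subRight_apply]
    · split_ifs <;> simp [smul_smul, inv_mul_cancel_left₀ (two_ne_zero' K)]

end IsNeutralFermion

end Heisenberg

section Virasoro

variable {K V : Type*} [Field K] [AddCommGroup V] [Module K V] {h : ℤ → Module.End K V}

/-- The bosonic normal ordered product `:h_j h_k:`. -/
def bosonNormalOrder (h : ℤ → Module.End K V) (j k : ℤ) : Module.End K V :=
  if j ≤ k then h j * h k else h k * h j

/-- The Virasoro relations with central charge `c`. -/
def IsVirasoro (L : ℤ → Module.End K V) (c : K) : Prop :=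
  ∀ m n, ⁅L m, L n⁆ = (m - n : K) • L (m + n)
    + (if m + n = 0 then (m ^ 3 - m : K) / 12 * c else 0) • (1 : Module.End K V)

namespace IsHeisenberg

/-- The scalar is the contraction of `h_j` and `h_k`, that is, their vacuum expectation value. -/
lemma normalOrder_eq (hh : IsHeisenberg h) (j k : ℤ) : bosonNormalOrder h j k =
    h j * h k - (if j + k = 0 then j * unitStep K j else 0) • (1 : Module.End K V) := by
  have swap := hh.lie_eq j k
  rw [Ring.lie_def, sub_eq_iff_eq_add'] at swap
  rw [bosonNormalOrder, unitStep]
  split_ifs with hjk hsum hj hj hsum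
  · simp [show j = 0 by omega]
  · simp
  · simp
  · rw [swap, if_pos hj]; simp
  · omega
  · rw [swap, if_neg hj]; simp

lemma hasFiniteSupport_normalOrder (hh : IsHeisenberg h) (n : ℤ) (x : V) :
    HasFiniteSupport fun j => bosonNormalOrder h j (n - j) x := by
  have hx := hh.eventually_eq_zero x
  refine hasFiniteSupport_int_iff.2 ⟨?_, ?_⟩
  · have htail : Tendsto (fun j : ℤ => n - j) atBot atTop :=
      tendsto_atTop_add_const_left _ n tendsto_neg_atBot_atTop
    filter_upwards [htail.eventually hx, eventually_le_atBot 0, eventually_le_atBot n]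
      with j hj hj₀ hjn
    simp [bosonNormalOrder, show j ≤ n - j by omega, hj]
  · filter_upwards [hx, eventually_gt_atTop 0, eventually_gt_atTop n] with j hj hj₀ hjn
    simp [bosonNormalOrder, show ¬ j ≤ n - j by omega, hj]

/-- The Sugawara operators `L_n = (1/2) ∑_{j ∈ ℤ} :h_j h_{n-j}:` of a Heisenberg field. -/
def sugawara (hh : IsHeisenberg h) (n : ℤ) : Module.End K V :=
  (1 / 2 : K) • pointwiseSum (fun j => bosonNormalOrder h j (n - j))
    (hh.hasFiniteSupport_normalOrder n)

lemma hasPointwiseSum_sugawara (hh : IsHeisenberg h) (n : ℤ) :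
    HasPointwiseSum (fun j => (1 / 2 : K) • bosonNormalOrder h j (n - j)) (hh.sugawara n) :=
  (hasPointwiseSum_pointwiseSum _ _).const_smul _

lemma lie_normalOrder_mode (hh : IsHeisenberg h) (i j k : ℤ) : ⁅bosonNormalOrder h i j, h k⁆ =
    (if j + k = 0 then (j : K) else 0) • h i + (if i + k = 0 then (i : K) else 0) • h j := by
  have leibniz : ⁅h i * h j, h k⁆ = h i * ⁅h j, h k⁆ + ⁅h i, h k⁆ * h j := by
    simp only [Ring.lie_def]
    noncomm_ring
  rw [hh.normalOrder_eq, sub_lie, ← lie_skew (_ • _), lie_smul_one, neg_zero, sub_zero, leibniz,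
    hh.lie_eq, hh.lie_eq]
  split_ifs <;> simp

lemma lie_sugawara_mode [NeZero (2 : K)] (hh : IsHeisenberg h) (n k : ℤ) :
    ⁅hh.sugawara n, h k⁆ = (-k : K) • h (n + k) := by
  let half := (1 / 2 : K) • (-k : K) • h (n + k)
  have halves : HasPointwiseSum
      (fun j => (Pi.single (n + k) half : ℤ → Module.End K V) j
        + (Pi.single (-k) half : ℤ → Module.End K V) j)
      ((-k : K) • h (n + k)) := by
    convert (hasPointwiseSum_single (n + k) half).add (hasPointwiseSum_single (-k) half)
    rw [← add_smul, add_halves, one_smul]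
  refine ((hh.hasPointwiseSum_sugawara n).lie_left (h k)).unique ?_
  convert halves using 2 with j
  rw [smul_lie, hh.lie_normalOrder_mode, smul_add]
  congr 1
  · rcases eq_or_ne j (n + k) with rfl | hj
    · rw [if_pos (by ring), Pi.single_eq_same, show n - (n + k) = -k by ring, Int.cast_neg]
    · rw [if_neg (by omega), Pi.single_eq_of_ne hj, zero_smul, smul_zero]
  · rcases eq_or_ne j (-k) with rfl | hj
    · rw [if_pos (by ring), Pi.single_eq_same, sub_neg_eq_add, Int.cast_neg]
    · rw [if_neg (by omega), Pi.single_eq_of_ne hj, zero_smul, smul_zero]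

lemma lie_sugawara_normalOrder [NeZero (2 : K)] (hh : IsHeisenberg h) (m j k : ℤ) :
    ⁅hh.sugawara m, bosonNormalOrder h j k⁆ =
      (-j : K) • (h (m + j) * h k) + (-k : K) • (h j * h (m + k)) := by
  rw [hh.normalOrder_eq, lie_sub, lie_smul_one, sub_zero]
  exact lie_mul_of_lie_eq_smul (hh.lie_sugawara_mode m j) (hh.lie_sugawara_mode m k)

/-- Up to contractions, the two terms coming from either boson are `g (m + j)` and
`(m - n) • :h_j h_{m+n-j}: - g j` with `g j = (m - j) • :h_j h_{m+n-j}:`. -/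
lemma lie_sugawara_summand [NeZero (2 : K)] (hh : IsHeisenberg h) (m n j : ℤ) :
    ⁅hh.sugawara m, bosonNormalOrder h j (n - j)⁆ =
      (m - (m + j : ℤ) : K) • bosonNormalOrder h (m + j) (m + n - (m + j))
        + ((m - n : K) • bosonNormalOrder h j (m + n - j)
          - (m - j : K) • bosonNormalOrder h j (m + n - j))
        + (if m + n = 0 then 1 else 0 : K) •
          ((j * (m + j) : K) * (unitStep K j - unitStep K (j + m))) • (1 : Module.End K V) := by
  rw [hh.lie_sugawara_normalOrder, hh.normalOrder_eq, hh.normalOrder_eq,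
    show m + n - (m + j) = n - j by ring, show m + (n - j) = m + n - j by ring, add_comm j m]
  by_cases hmn : m + n = 0
  · obtain rfl : n = -m := by omega
    rw [if_pos hmn, if_pos (by omega), if_pos (by omega)]
    push_cast
    module
  · rw [if_neg hmn, if_neg (by omega), if_neg (by omega)]
    push_cast
    module

theorem isVirasoro_sugawara [CharZero K] (hh : IsHeisenberg h) : IsVirasoro hh.sugawara 1 := by
  intro m n
  have normalOrder_sum := hasPointwiseSum_pointwiseSum _ (hh.hasFiniteSupport_normalOrder (m + n))
  obtain ⟨G, weighted_sum⟩ := normalOrder_sum.exists_smul fun j : ℤ => (m - j : K)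
  have contraction_sum := hasPointwiseSum_mul_unitStep_sub (f := fun j : ℤ => (j * (m + j) : K))
    (F := fun j : ℤ => (j * (j - 1) * (2 * j - 1) / 6 + m * (j * (j - 1) / 2) : K))
    (fun j => by push_cast; ring) m (1 : Module.End K V)
  have total := (((weighted_sum.comp_equiv (Equiv.addLeft m)).add
    ((normalOrder_sum.const_smul (m - n : K)).sub weighted_sum)).add
    (contraction_sum.const_smul (if m + n = 0 then 1 else 0))).const_smul (1 / 2 : K)
  refine ((hh.hasPointwiseSum_sugawara n).lie_right (hh.sugawara m)).unique ?_
  convert total using 2 with j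
  · rw [lie_smul, hh.lie_sugawara_summand, Equiv.coe_addLeft]
  · rw [sugawara]
    split_ifs
    · push_cast
      module
    · module

/-- The family `L_n + ((λ - 1/2)(n + 1/2) - b) h_n + M δ_{n,0}` of deformations of the Sugawara
operators, where `M = (16b² + 8b(1 - 2λ) - 3(1 - 2λ)²)/32`. -/
def deformedSugawara (hh : IsHeisenberg h) (lam b : K) (n : ℤ) : Module.End K V :=
  hh.sugawara n + ((lam - 1 / 2) * (n + 1 / 2) - b) • h n
    + (if n = 0 then (16 * b ^ 2 + 8 * b * (1 - 2 * lam) - 3 * (1 - 2 * lam) ^ 2) / 32 else 0) •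
      (1 : Module.End K V)

end IsHeisenberg

/-- Adding a multiple of the derivative of the Heisenberg field changes the central charge; the
constant shift of `L_0` absorbs the remaining central terms. -/
theorem IsVirasoro.add_heisenberg [CharZero K] {L : ℤ → Module.End K V} {c : K}
    (hL : IsVirasoro L c) (hh : IsHeisenberg h)
    (primary : ∀ n k : ℤ, ⁅L n, h k⁆ = (-k : K) • h (n + k)) (α β : K) :
    IsVirasoro (fun n => L n + (α * n + β) • h n
      + (if n = 0 then (β ^ 2 - α ^ 2) / 2 else 0) • (1 : Module.End K V)) (c - 12 * α ^ 2) := by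
  intro m n
  have primary' : ⁅h m, L n⁆ = (m : K) • h (m + n) := by
    rw [← lie_skew, primary, add_comm n m]
    module
  have lie_one (A : Module.End K V) : ⁅A, (1 : Module.End K V)⁆ = 0 := (Commute.one_right A).lie_eq
  have one_lie (A : Module.End K V) : ⁅(1 : Module.End K V), A⁆ = 0 := (Commute.one_left A).lie_eq
  simp only [lie_add, add_lie, lie_smul, smul_lie, lie_one, one_lie, hL m n, primary, primary',
    hh.lie_eq]
  by_cases hmn : m + n = 0
  · obtain rfl : n = -m := by omega
    simp only [hmn, if_true]
    push_cast
    module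
  · simp only [hmn, if_false]
    push_cast
    module

theorem virasoro_two_parameter_family_general [CharZero K] (hh : IsHeisenberg h) (lam b : K) :
    IsVirasoro (hh.deformedSugawara lam b) (-12 * lam ^ 2 + 12 * lam - 2) ∧
      hh.deformedSugawara (1 / 2) 0 = hh.sugawara := by
  constructor
  · convert hh.isVirasoro_sugawara.add_heisenberg hh hh.lie_sugawara_mode (lam - 1 / 2)
      ((lam - 1 / 2) / 2 - b) using 1
    · funext n
      rw [IsHeisenberg.deformedSugawara]
      congr 2
      · congr 1; ring
      · split_ifs <;> ring
    · ring
  · funext n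
    simp [IsHeisenberg.deformedSugawara]

end Virasoro

section FermionicFockSpace

/-- The element of `ℕ` that the fermion mode `a_m` adds (for `0 ≤ m`) or removes (for `m < 0`). -/
def modeIndex (m : ℤ) : ℕ := if 0 ≤ m then m.toNat else (-m - 1).toNat

/-- The sign `(-1)^{|{s ∈ S : s > t}|}`. -/
def tailSign (t : ℕ) (S : Finset ℕ) : ℂ := (-1) ^ (S.filter (t < ·)).card

lemma modeIndex_eq_modeIndex_iff {m n : ℤ} : modeIndex m = modeIndex n ↔ m = n ∨ m + n = -1 := by
  unfold modeIndex
  split_ifs <;> omega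

section SymmDiff

variable {α : Type*} [DecidableEq α] {S : Finset α} {t : α}

lemma symmDiff_singleton_of_mem (ht : t ∈ S) : S ∆ {t} = S.erase t := by
  ext s
  simp only [Finset.mem_symmDiff, Finset.mem_singleton, Finset.mem_erase]
  grind

lemma symmDiff_singleton_of_notMem (ht : t ∉ S) : S ∆ {t} = insert t S := by
  ext s
  simp only [Finset.mem_symmDiff, Finset.mem_singleton, Finset.mem_insert]
  grind

end SymmDiff

lemma aVec_eq (m : ℤ) (S : Finset ℕ) : aVec m S =
    if (modeIndex m ∈ S ↔ m < 0) then tailSign (modeIndex m) S • eD (S ∆ {modeIndex m}) else 0 := by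
  unfold aVec tailSign
  rcases le_or_gt 0 m with hm | hm
  · rw [if_pos hm, show modeIndex m = m.toNat from if_pos hm]
    simp only [hm.not_gt, iff_false, ite_not]
    split_ifs with hmem
    · rfl
    · rw [symmDiff_singleton_of_notMem hmem]
  · rw [if_neg hm.not_ge, show modeIndex m = (-m - 1).toNat from if_neg hm.not_ge]
    simp only [hm, iff_true]
    split_ifs with hmem
    · rw [symmDiff_singleton_of_mem hmem]
    · rfl

lemma aOp_eD (m : ℤ) (S : Finset ℕ) : aOp m (eD S) = aVec m S := by
  simp [aOp, eD]

lemma tailSign_insert {u : ℕ} {S : Finset ℕ} (hu : u ∉ S) (t : ℕ) :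
    tailSign t (insert u S) = if t < u then -tailSign t S else tailSign t S := by
  rw [tailSign, tailSign, Finset.filter_insert]
  split_ifs
  · rw [Finset.card_insert_of_notMem fun h => hu (Finset.mem_of_mem_filter u h), pow_succ,
      mul_neg_one]
  · rfl

lemma tailSign_symmDiff_singleton (t u : ℕ) (S : Finset ℕ) :
    tailSign t (S ∆ {u}) = if t < u then -tailSign t S else tailSign t S := by
  by_cases hu : u ∈ S
  · rw [symmDiff_singleton_of_mem hu]
    nth_rw 2 3 [← Finset.insert_erase hu]
    rw [tailSign_insert (Finset.notMem_erase u S)]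
    split_ifs
    · rw [neg_neg]
    · rfl
  · rw [symmDiff_singleton_of_notMem hu, tailSign_insert hu]

lemma tailSign_mul_self (t : ℕ) (S : Finset ℕ) : tailSign t S * tailSign t S = 1 := by
  rw [tailSign, ← mul_pow, neg_one_mul, neg_neg, one_pow]

lemma aOp_aOp_eD (m n : ℤ) (S : Finset ℕ) : aOp m (aOp n (eD S)) =
    if (modeIndex n ∈ S ↔ n < 0) ∧ (modeIndex m ∈ S ∆ {modeIndex n} ↔ m < 0) then
      (tailSign (modeIndex n) S * tailSign (modeIndex m) (S ∆ {modeIndex n})) •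
        eD (S ∆ {modeIndex n} ∆ {modeIndex m})
    else 0 := by
  rw [aOp_eD, aVec_eq, ite_and]
  split_ifs with hn hm
  · rw [map_smul, aOp_eD, aVec_eq, if_pos hm, smul_smul]
  · rw [map_smul, aOp_eD, aVec_eq, if_neg hm, smul_zero]
  · rw [map_zero]

lemma aOp_anticomm_eD_of_lt {m n : ℤ} (hmn : modeIndex m < modeIndex n) (S : Finset ℕ) :
    aOp m (aOp n (eD S)) + aOp n (aOp m (eD S)) = 0 := by
  have active (k l : ℤ) (hkl : modeIndex k ≠ modeIndex l) :
      modeIndex k ∈ S ∆ {modeIndex l} ↔ modeIndex k ∈ S := by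
    simp [Finset.mem_symmDiff, hkl]
  simp only [aOp_aOp_eD, active m n hmn.ne, active n m hmn.ne', tailSign_symmDiff_singleton,
    if_pos hmn, if_neg hmn.not_gt, and_comm (a := (modeIndex n ∈ S ↔ n < 0))]
  rw [symmDiff_right_comm S]
  split_ifs
  · module
  · rw [add_zero]

lemma aOp_aOp_eD_self (m : ℤ) (S : Finset ℕ) : aOp m (aOp m (eD S)) = 0 := by
  rw [aOp_aOp_eD, if_neg]
  simp only [Finset.mem_symmDiff, Finset.mem_singleton]
  tauto

lemma aOp_aOp_eD_of_add_eq {m n : ℤ} (hmn : m + n = -1) (S : Finset ℕ) :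
    aOp m (aOp n (eD S)) = if (modeIndex m ∈ S ↔ n < 0) then eD S else 0 := by
  have index : modeIndex n = modeIndex m := modeIndex_eq_modeIndex_iff.2 (.inr (by omega))
  have flip : modeIndex m ∈ S ∆ {modeIndex m} ↔ modeIndex m ∉ S := by simp [Finset.mem_symmDiff]
  simp only [aOp_aOp_eD, index, flip, tailSign_symmDiff_singleton, lt_irrefl, if_false,
    tailSign_mul_self, one_smul, symmDiff_symmDiff_cancel_right]
  congr 1
  grind

lemma aOp_anticomm_eD (m n : ℤ) (S : Finset ℕ) :
    aOp m (aOp n (eD S)) + aOp n (aOp m (eD S)) = if m + n = -1 then eD S else 0 := by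
  by_cases hmn : m + n = -1
  · have index : modeIndex n = modeIndex m := modeIndex_eq_modeIndex_iff.2 (.inr (by omega))
    rw [aOp_aOp_eD_of_add_eq hmn, aOp_aOp_eD_of_add_eq (by omega), index, if_pos hmn]
    split_ifs <;> grind
  rw [if_neg hmn]
  rcases lt_trichotomy (modeIndex m) (modeIndex n) with hlt | heq | hgt
  · exact aOp_anticomm_eD_of_lt hlt S
  · obtain rfl : m = n := (modeIndex_eq_modeIndex_iff.1 heq).resolve_right hmn
    rw [aOp_aOp_eD_self, add_zero]
  · rw [add_comm, aOp_anticomm_eD_of_lt hgt]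

lemma eventually_aOp_eq_zero (x : FockD) : ∀ᶠ m in atBot, aOp m x = 0 := by
  induction x using Finsupp.induction_linear with
  | zero => simp
  | add x y hx hy =>
    filter_upwards [hx, hy] with m hmx hmy
    rw [map_add, hmx, hmy, add_zero]
  | single S c =>
    obtain ⟨N, hN⟩ := S.bddAbove
    filter_upwards [eventually_lt_atBot (-N - 1 : ℤ)] with m hm
    have notMem : modeIndex m ∉ S := fun hmem => by
      have index_le := hN hmem
      rw [modeIndex, if_neg (by omega)] at index_le
      omega
    rw [← mul_one c, ← smul_eq_mul, ← Finsupp.smul_single, map_smul, ← eD, aOp_eD, aVec_eq,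
      if_neg (by simp [notMem]; omega), smul_zero]

theorem isNeutralFermion_aOp : IsNeutralFermion (R := ℂ) aOp where
  anticomm m n := by
    refine Finsupp.lhom_ext' fun S => LinearMap.ext_ring ?_
    have anticomm := aOp_anticomm_eD m n S
    split_ifs at anticomm ⊢ <;> exact anticomm
  eventually_eq_zero := eventually_aOp_eq_zero

lemma hD_eq_heisenbergMode (n : ℤ) (x : FockD) : hD n x = heisenbergMode isNeutralFermion_aOp n x :=
  rfl

lemma L1D_eq_sugawara (n : ℤ) (x : FockD) :
    L1D n x = isNeutralFermion_aOp.isHeisenberg_heisenbergMode.sugawara n x := by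
  refine congrArg ((1 / 2 : ℂ) • ·) (finsum_congr fun j => ?_)
  simp only [hD_eq_heisenbergMode, bosonNormalOrder]
  split_ifs <;> rfl

lemma Llb_eq_deformedSugawara (lam b : ℂ) (n : ℤ) (x : FockD) : Llb lam b n x =
    isNeutralFermion_aOp.isHeisenberg_heisenbergMode.deformedSugawara lam b n x := by
  rw [Llb, L1D_eq_sugawara, hD_eq_heisenbergMode]
  rfl

end FermionicFockSpace

/-- For every `λ, b ∈ ℂ` the operators `L^{λ,b}_n` satisfy the Virasoro relations with
central charge `−12λ² + 12λ − 2`; and for `λ = 1/2`, `b = 0` one recovers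
`L^{1/2,0}_n = L¹_n` (of central charge `1`). -/
theorem virasoro_two_parameter_family (lam b : ℂ) :
    (∀ (m n : ℤ) (x : FockD),
      Llb lam b m (Llb lam b n x) - Llb lam b n (Llb lam b m x)
        = ((m - n : ℤ) : ℂ) • Llb lam b (m + n) x
          + (if m = -n then
              ((m ^ 3 - m : ℤ) : ℂ) / 12 * (-12 * lam ^ 2 + 12 * lam - 2) else 0) • x) ∧
    (∀ (n : ℤ) (x : FockD), Llb (1 / 2) 0 n x = L1D n x) := by
  obtain ⟨isVirasoro, eq_sugawara⟩ := virasoro_two_parameter_family_general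
    isNeutralFermion_aOp.isHeisenberg_heisenbergMode lam b
  exact ⟨fun m n x => by
    simpa [Llb_eq_deformedSugawara, ← eq_neg_iff_add_eq_zero, -ite_smul] using
      LinearMap.congr_fun (isVirasoro m n) x,
    fun n x => by rw [Llb_eq_deformedSugawara, L1D_eq_sugawara, eq_sugawara]⟩
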